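/- Let H = Z^{2g} with symplectic basis (x_i, y_i), ω = Σ x_i ∧ y_i ∈ Λ^2 H, A_g = A_{g,1} + H ⊗ ω ⊂ H ⊗ L_2(H) (where L_2(H) is identified with Λ^2 H and A_{g,1} = {Σ_i (x_i⊗[h,y_i] - y_i⊗[h,x_i]) : h ∈ H}). Then ν(ω ∧ H) ⊆ A_g, so ν induces a map Λ^3 H/(ω ∧ H) → (H ⊗ L_2(H))/A_g, and this induced map is injective. -/

import Mathlib

/-- `H = ℤ^{2g}` with basis indexed by `Fin g ⊕ Fin g` (`Sum.inl i = x_i`, `Sum.inr i = y_i`). -/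
abbrev Hgrp (g : ℕ) := Fin g ⊕ Fin g → ℤ

/-- The symplectic intersection form `•` on `H`. -/
def isym (g : ℕ) (a b : Hgrp g) : ℤ :=
  ∑ i : Fin g, (a (Sum.inl i) * b (Sum.inr i) - a (Sum.inr i) * b (Sum.inl i))
/-- The symplectic basis vectors `x_i` of `H`. -/
def xb (g : ℕ) (i : Fin g) : Hgrp g := Pi.single (Sum.inl i) 1

/-- The symplectic basis vectors `y_i` of `H`. -/
def yb (g : ℕ) (i : Fin g) : Hgrp g := Pi.single (Sum.inr i) 1

open scoped TensorProduct

/-- The wedge product `a ∧ b ∧ c` as an element of the third exterior power. -/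
noncomputable def wedge3 {R M : Type*} [CommRing R] [AddCommGroup M] [Module R M]
    (a b c : M) : ⋀[R]^3 M :=
  ⟨ExteriorAlgebra.ιMulti R 3 ![a, b, c],
    ExteriorAlgebra.ιMulti_range R 3 ⟨![a, b, c], rfl⟩⟩

/-- The wedge product `a ∧ b` as an element of the second exterior power. -/
noncomputable def wedge2 {R M : Type*} [CommRing R] [AddCommGroup M] [Module R M]
    (a b : M) : ⋀[R]^2 M :=
  ⟨ExteriorAlgebra.ιMulti R 2 ![a, b],
    ExteriorAlgebra.ιMulti_range R 2 ⟨![a, b], rfl⟩⟩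

/-- The symplectic element `ω = ∑ᵢ xᵢ ∧ yᵢ ∈ Λ²H`. -/
noncomputable def omegaW (g : ℕ) : ⋀[ℤ]^2 (Hgrp g) :=
  ∑ i : Fin g, wedge2 (xb g i) (yb g i)

/-- `ω ∧ h ∈ Λ³H`. -/
noncomputable def omegaWedge (g : ℕ) (h : Hgrp g) : ⋀[ℤ]^3 (Hgrp g) :=
  ∑ i : Fin g, wedge3 (xb g i) (yb g i) h

/-- The subgroup `A_g = A_{g,1} + H ⊗ ω` of `H ⊗ L₂(H)` (with `L₂(H) ≅ Λ²H`). -/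
noncomputable def Ag (g : ℕ) : Submodule ℤ (Hgrp g ⊗[ℤ] ⋀[ℤ]^2 (Hgrp g)) :=
  Submodule.span ℤ
    ({v | ∃ h : Hgrp g, v = ∑ i : Fin g,
        (xb g i ⊗ₜ wedge2 h (yb g i) - yb g i ⊗ₜ wedge2 h (xb g i))} ∪
     {v | ∃ h : Hgrp g, v = h ⊗ₜ omegaW g})

section helpers

variable {M : Type*} [AddCommGroup M]

lemma wedge2_coe (a b : M) : ((wedge2 (R := ℤ) a b : ⋀[ℤ]^2 M) : ExteriorAlgebra ℤ M)
    = ExteriorAlgebra.ι ℤ a * ExteriorAlgebra.ι ℤ b := by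
  simp [wedge2, ExteriorAlgebra.ιMulti_apply]

lemma wedge3_coe (a b c : M) : ((wedge3 (R := ℤ) a b c : ⋀[ℤ]^3 M) : ExteriorAlgebra ℤ M)
    = ExteriorAlgebra.ι ℤ a * (ExteriorAlgebra.ι ℤ b * ExteriorAlgebra.ι ℤ c) := by
  simp [wedge3, ExteriorAlgebra.ιMulti_apply]

lemma wedge2_add_left (a a' b : M) :
    wedge2 (R := ℤ) (a + a') b = wedge2 a b + wedge2 a' b := by
  apply Subtype.ext; simp [wedge2_coe, add_mul]

lemma wedge2_add_right (a b b' : M) :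
    wedge2 (R := ℤ) a (b + b') = wedge2 a b + wedge2 a b' := by
  apply Subtype.ext; simp [wedge2_coe, mul_add]

lemma wedge2_smul_left (c : ℤ) (a b : M) :
    wedge2 (R := ℤ) (c • a) b = c • wedge2 a b := by
  apply Subtype.ext
  rw [Submodule.coe_smul, wedge2_coe, wedge2_coe, LinearMap.map_smul, smul_mul_assoc]

lemma wedge2_smul_right (c : ℤ) (a b : M) :
    wedge2 (R := ℤ) a (c • b) = c • wedge2 a b := by
  apply Subtype.ext
  rw [Submodule.coe_smul, wedge2_coe, wedge2_coe, LinearMap.map_smul, mul_smul_comm]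

lemma wedge2_self (a : M) : wedge2 (R := ℤ) a a = 0 := by
  apply Subtype.ext; simp [wedge2_coe]

lemma wedge2_swap (a b : M) : wedge2 (R := ℤ) a b = - wedge2 b a := by
  apply Subtype.ext
  simp only [wedge2_coe, Submodule.coe_neg]
  exact eq_neg_of_add_eq_zero_left (ExteriorAlgebra.ι_add_mul_swap a b)

/-- `ν` as an alternating map. -/
noncomputable def nuAlt (M : Type*) [AddCommGroup M] : M [⋀^Fin 3]→ₗ[ℤ] M ⊗[ℤ] ⋀[ℤ]^2 M where
  toFun v := v 0 ⊗ₜ wedge2 (v 1) (v 2) + v 1 ⊗ₜ wedge2 (v 2) (v 0) + v 2 ⊗ₜ wedge2 (v 0) (v 1)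
  map_update_add' := by
    intro inst m i x y
    have : inst = instDecidableEqFin 3 := Subsingleton.elim _ _
    subst this
    fin_cases i <;>
    simp [Function.update, wedge2_add_left, wedge2_add_right, TensorProduct.add_tmul,
      TensorProduct.tmul_add] <;> abel
  map_update_smul' := by
    intro inst m i c x
    have : inst = instDecidableEqFin 3 := Subsingleton.elim _ _
    subst this
    fin_cases i <;>
    simp [Function.update, wedge2_smul_left, wedge2_smul_right, TensorProduct.smul_tmul',
      TensorProduct.tmul_smul, -zsmul_eq_mul]
  map_eq_zero_of_eq' := by
    intro v i j h hij
    fin_cases i <;> fin_cases j <;> simp at h hij ⊢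
    · rw [h, wedge2_self, wedge2_swap (v 2) (v 1)]; simp [TensorProduct.tmul_neg]
    · rw [h, wedge2_self, wedge2_swap (v 2) (v 1)]; simp [TensorProduct.tmul_neg]
    · rw [h, wedge2_self, wedge2_swap (v 2) (v 0)]; simp [TensorProduct.tmul_neg]
    · rw [h, wedge2_self, wedge2_swap (v 2) (v 0)]; simp [TensorProduct.tmul_neg]
    · rw [h, wedge2_self, wedge2_swap (v 1) (v 0)]; simp [TensorProduct.tmul_neg]
    · rw [h, wedge2_self, wedge2_swap (v 0) (v 1)]; simp [TensorProduct.tmul_neg]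

/-- The map `ν`. -/
noncomputable def nuMap (M : Type*) [AddCommGroup M] : ⋀[ℤ]^3 M →ₗ[ℤ] M ⊗[ℤ] ⋀[ℤ]^2 M :=
  exteriorPower.alternatingMapLinearEquiv (nuAlt M)

lemma nuMap_wedge3 (x y z : M) : nuMap M (wedge3 x y z)
    = x ⊗ₜ wedge2 y z + y ⊗ₜ wedge2 z x + z ⊗ₜ wedge2 x y :=
  exteriorPower.alternatingMapLinearEquiv_apply_ιMulti (nuAlt M) ![x, y, z]

/-- Multiplication `H ⊗ Λ²H → ΛH`. -/
noncomputable def muMap (M : Type*) [AddCommGroup M] :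
    M ⊗[ℤ] ⋀[ℤ]^2 M →ₗ[ℤ] ExteriorAlgebra ℤ M :=
  TensorProduct.lift
    ((LinearMap.mul ℤ (ExteriorAlgebra ℤ M)).compl₁₂ (ExteriorAlgebra.ι ℤ) (Submodule.subtype _))

lemma muMap_tmul (x : M) (w : ⋀[ℤ]^2 M) :
    muMap M (x ⊗ₜ w) = ExteriorAlgebra.ι ℤ x * (w : ExteriorAlgebra ℤ M) := by
  exact TensorProduct.lift.tmul _ _

lemma hom_ext3 {N : Type*} [AddCommGroup N] {f f' : ⋀[ℤ]^3 M →ₗ[ℤ] N}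
    (h : ∀ x y z, f (wedge3 x y z) = f' (wedge3 x y z)) : f = f' := by
  apply exteriorPower.linearMap_ext
  ext v
  have hv : v = ![v 0, v 1, v 2] := by ext i; fin_cases i <;> rfl
  rw [hv]
  exact h (v 0) (v 1) (v 2)

lemma mu_nu (w : ⋀[ℤ]^3 M) : muMap M (nuMap M w) = (3 : ℤ) • (w : ExteriorAlgebra ℤ M) := by
  have : (muMap M).comp (nuMap M) = (3 : ℤ) • Submodule.subtype _ := by
    apply hom_ext3
    intro x y z
    simp only [LinearMap.comp_apply, nuMap_wedge3, map_add, muMap_tmul, wedge2_coe,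
      LinearMap.smul_apply, Submodule.subtype_apply, wedge3_coe]
    have e : ∀ a b : M, ExteriorAlgebra.ι ℤ a * ExteriorAlgebra.ι ℤ b
        = - (ExteriorAlgebra.ι ℤ b * ExteriorAlgebra.ι ℤ a) := fun a b =>
      eq_neg_of_add_eq_zero_left (ExteriorAlgebra.ι_add_mul_swap a b)
    have h1 : ExteriorAlgebra.ι ℤ y * (ExteriorAlgebra.ι ℤ z * ExteriorAlgebra.ι ℤ x)
        = ExteriorAlgebra.ι ℤ x * (ExteriorAlgebra.ι ℤ y * ExteriorAlgebra.ι ℤ z) := by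
      rw [e z x, mul_neg, ← mul_assoc, e y x, neg_mul, neg_neg, mul_assoc]
    have h2 : ExteriorAlgebra.ι ℤ z * (ExteriorAlgebra.ι ℤ x * ExteriorAlgebra.ι ℤ y)
        = ExteriorAlgebra.ι ℤ x * (ExteriorAlgebra.ι ℤ y * ExteriorAlgebra.ι ℤ z) := by
      rw [← mul_assoc, e z x, neg_mul, mul_assoc, e z y, mul_neg, neg_neg]
    rw [h1, h2]
    abel
  exact DFunLike.congr_fun this w

lemma nuMap_inj [Module.Free ℤ M] (w : ⋀[ℤ]^3 M) (h : nuMap M w = 0) : w = 0 := by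
  have h3 : (3 : ℤ) • w = 0 := by
    apply Subtype.ext
    have := mu_nu w
    rw [h, map_zero] at this
    rw [Submodule.coe_smul, ← this]
    rfl
  have : Module.IsTorsionFree ℤ (⋀[ℤ]^3 M) := inferInstance
  exact (smul_eq_zero.mp h3).resolve_left (by norm_num)

/-- A `2 × 2` minor as an alternating map. -/
noncomputable def minorAlt {I : Type*} (a c : I) : (I → ℤ) [⋀^Fin 2]→ₗ[ℤ] ℤ where
  toFun v := v 0 a * v 1 c - v 0 c * v 1 a
  map_update_add' := by
    intro inst m i x y
    have : inst = instDecidableEqFin 2 := Subsingleton.elim _ _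
    subst this
    fin_cases i <;> simp [Function.update] <;> ring
  map_update_smul' := by
    intro inst m i k x
    have : inst = instDecidableEqFin 2 := Subsingleton.elim _ _
    subst this
    fin_cases i <;> simp [Function.update] <;> ring
  map_eq_zero_of_eq' := by
    intro v i j h hij
    fin_cases i <;> fin_cases j <;> simp at h hij ⊢
    · rw [h]; ring
    · rw [h]; ring

/-- The functional `h ⊗ (p ∧ q) ↦ h_a (p_a q_c - p_c q_a)`. -/
noncomputable def phiMap {I : Type*} (a c : I) :
    (I → ℤ) ⊗[ℤ] ⋀[ℤ]^2 (I → ℤ) →ₗ[ℤ] ℤ :=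
  TensorProduct.lift ((LinearMap.mul ℤ ℤ).compl₁₂ (LinearMap.proj a)
    (exteriorPower.alternatingMapLinearEquiv (minorAlt a c)))

lemma minor_wedge2 {I : Type*} (a c : I) (p q : I → ℤ) :
    exteriorPower.alternatingMapLinearEquiv (minorAlt a c) (wedge2 p q)
      = p a * q c - p c * q a :=
  exteriorPower.alternatingMapLinearEquiv_apply_ιMulti (minorAlt a c) ![p, q]

lemma phiMap_tmul {I : Type*} (a c : I) (h : I → ℤ) (w : ⋀[ℤ]^2 (I → ℤ)) :
    phiMap a c (h ⊗ₜ w) =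
      h a * exteriorPower.alternatingMapLinearEquiv (minorAlt a c) w := by
  exact TensorProduct.lift.tmul _ _

lemma phi_nu {I : Type*} (a c : I) (w : ⋀[ℤ]^3 (I → ℤ)) :
    phiMap a c (nuMap _ w) = 0 := by
  have : (phiMap a c).comp (nuMap (I → ℤ)) = 0 := by
    apply hom_ext3
    intro x y z
    simp only [LinearMap.comp_apply, nuMap_wedge3, map_add, phiMap_tmul, minor_wedge2,
      LinearMap.zero_apply]
    ring
  exact DFunLike.congr_fun this w

lemma phi_omega_left (g : ℕ) (i : Fin g) (m : Hgrp g) :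
    phiMap (Sum.inl i) (Sum.inr i) (m ⊗ₜ omegaW g) = m (Sum.inl i) := by
  simp [phiMap_tmul, omegaW, minor_wedge2, xb, yb, Pi.single_apply]

lemma phi_omega_right (g : ℕ) (i : Fin g) (m : Hgrp g) :
    phiMap (Sum.inr i) (Sum.inl i) (m ⊗ₜ omegaW g) = - m (Sum.inr i) := by
  simp [phiMap_tmul, omegaW, minor_wedge2, xb, yb, Pi.single_apply]

lemma omega_zero (g : ℕ) (m : Hgrp g) (w : ⋀[ℤ]^3 (Hgrp g))
    (h : nuMap _ w = m ⊗ₜ omegaW g) : w = 0 := by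
  have hm : m = 0 := by
    ext j
    rcases j with i | i
    · have := phi_omega_left g i m
      rw [← h, phi_nu] at this
      simpa using this.symm
    · have := phi_omega_right g i m
      rw [← h, phi_nu] at this
      simpa using this.symm
  apply nuMap_inj
  rw [h, hm, TensorProduct.zero_tmul]

/-- The generator `a(h)` of `A_{g,1}`. -/
noncomputable def aEl (g : ℕ) (h : Hgrp g) : Hgrp g ⊗[ℤ] ⋀[ℤ]^2 (Hgrp g) :=
  ∑ i : Fin g, (xb g i ⊗ₜ wedge2 h (yb g i) - yb g i ⊗ₜ wedge2 h (xb g i))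

lemma nu_omegaWedge (g : ℕ) (h : Hgrp g) :
    nuMap _ (omegaWedge g h) = h ⊗ₜ omegaW g - aEl g h := by
  simp only [omegaWedge, map_sum, nuMap_wedge3, omegaW, aEl, TensorProduct.tmul_sum,
    ← Finset.sum_sub_distrib]
  refine Finset.sum_congr rfl fun i _ => ?_
  rw [wedge2_swap (yb g i) h, TensorProduct.tmul_neg]
  abel

/-- Any element of `A_g` is, modulo `ν(ω ∧ H)`, in `H ⊗ ω`. -/
lemma mem_Ag (g : ℕ) (v : Hgrp g ⊗[ℤ] ⋀[ℤ]^2 (Hgrp g)) (hv : v ∈ Ag g) :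
    ∃ u ∈ Submodule.span ℤ {u | ∃ h : Hgrp g, u = omegaWedge g h}, ∃ m : Hgrp g,
      v = nuMap _ u + m ⊗ₜ omegaW g := by
  unfold Ag at hv
  induction hv using Submodule.span_induction with
  | mem x hx =>
    rcases hx with ⟨h, rfl⟩ | ⟨h, rfl⟩
    · refine ⟨- omegaWedge g h, Submodule.neg_mem _ (Submodule.subset_span ⟨h, rfl⟩), h, ?_⟩
      rw [map_neg, nu_omegaWedge]
      change aEl g h = _
      abel
    · exact ⟨0, Submodule.zero_mem _, h, by simp⟩
  | zero => exact ⟨0, Submodule.zero_mem _, 0, by simp⟩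
  | add x y _ _ hx hy =>
    obtain ⟨u, hu, m, rfl⟩ := hx
    obtain ⟨u', hu', m', rfl⟩ := hy
    refine ⟨u + u', Submodule.add_mem _ hu hu', m + m', ?_⟩
    rw [map_add, TensorProduct.add_tmul]
    abel
  | smul c x _ hx =>
    obtain ⟨u, hu, m, rfl⟩ := hx
    refine ⟨c • u, Submodule.smul_mem _ c hu, c • m, ?_⟩
    rw [LinearMap.map_smul, smul_add, TensorProduct.smul_tmul']

end helpers

/-- `ν(ω ∧ H) ⊆ A_g`, so `ν` induces a map `Λ³H/(ω∧H) → (H ⊗ L₂(H))/A_g`, and this induced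
map is injective (elements of `Λ³H` sent into `A_g` lie in `ω ∧ H`). -/
theorem nu_mod_Ag_injective (g : ℕ) :
    ∃ ν : ⋀[ℤ]^3 (Hgrp g) →ₗ[ℤ] Hgrp g ⊗[ℤ] ⋀[ℤ]^2 (Hgrp g),
      (∀ x y z : Hgrp g, ν (wedge3 x y z)
          = x ⊗ₜ wedge2 y z + y ⊗ₜ wedge2 z x + z ⊗ₜ wedge2 x y) ∧
      (∀ h : Hgrp g, ν (omegaWedge g h) ∈ Ag g) ∧
      (∀ w : ⋀[ℤ]^3 (Hgrp g), ν w ∈ Ag g →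
        w ∈ Submodule.span ℤ {u | ∃ h : Hgrp g, u = omegaWedge g h}) := by
  refine ⟨nuMap _, nuMap_wedge3, fun h => ?_, fun w hw => ?_⟩
  · rw [nu_omegaWedge]
    exact Submodule.sub_mem _ (Submodule.subset_span (Or.inr ⟨h, rfl⟩))
      (Submodule.subset_span (Or.inl ⟨h, rfl⟩))
  · obtain ⟨u, hu, m, h⟩ := mem_Ag g _ hw
    have h0 : w - u = 0 := omega_zero g m (w - u) (by rw [map_sub, h]; abel)
    rwa [sub_eq_zero.mp h0]
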